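/- arXiv:1011.3471 — 2 statements merged into one kernel-verified Lean document; each statement's English description precedes it below -/
import Mathlib

section
/- For a Hopf algebra H over k with involutive antipode (S² = id), the Connes–Moscovici cocyclic operator τ_n(h^1 ⊗⋯⊗ h^n) = S(h^1)_{(1)}h^2 ⊗ ⋯ ⊗ S(h^1)_{(n-1)}h^n ⊗ S(h^1)_{(n)} on H^{⊗n} satisfies τ_n^{n+1} = id. -/
/-!
STATEMENT 12: For a Hopf algebra `H` over `k` with involutive antipode (`S² = id`), the
Connes–Moscovici cocyclic operator
`τ_n(h¹ ⊗ ⋯ ⊗ hⁿ) = S(h¹)_{(1)}h² ⊗ ⋯ ⊗ S(h¹)_{(n-1)}hⁿ ⊗ S(h¹)_{(n)}`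
on `H^{⊗n}` satisfies `τ_n^{n+1} = id`.

We model the tensor powers recursively: `TPow 0 = k` and `TPow (n+1) = H ⊗[k] TPow n`
(so `TPow n ≅ H^{⊗n}`), and build `τ` on `TPow (n+1)` from the iterated comultiplication,
the antipode, and factorwise multiplication.
-/

open TensorProduct LinearMap

universe u
variable (k H : Type u) [CommRing k] [Ring H] [HopfAlgebra k H]

/-- Tensor powers of `H` over `k` : `TPowM n ≅ H^{⊗ n}` (as an object of `ModuleCat k`,
so that the recursion carries its module structure along). -/
noncomputable def TPowM : ℕ → ModuleCat.{u} k
  | 0 => ModuleCat.of k k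
  | n + 1 => ModuleCat.of k (H ⊗[k] TPowM n)

/-- Appending the unit `1 : H` as a last tensor factor: `x ↦ x ⊗ 1`. -/
noncomputable def appEnd : ∀ n : ℕ, TPowM k H n →ₗ[k] TPowM k H (n + 1)
  | 0 => (TensorProduct.mk k H k 1 : k →ₗ[k] H ⊗[k] k)
  | n + 1 => (LinearMap.lTensor H (appEnd n) :
      H ⊗[k] TPowM k H n →ₗ[k] H ⊗[k] TPowM k H (n + 1))

/-- The iterated comultiplication `Δ^{n-1} : H → H^{⊗ n}` (with `Δ^{-1} := ε`). -/
noncomputable def comulPow : ∀ n : ℕ, H →ₗ[k] TPowM k H n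
  | 0 => Coalgebra.counit
  | n + 1 =>
      ((TensorProduct.map LinearMap.id (comulPow n) :
          H ⊗[k] H →ₗ[k] H ⊗[k] TPowM k H n) ∘ₗ Coalgebra.comul)

/-- Factorwise multiplication `H^{⊗n} ⊗ H^{⊗n} → H^{⊗n}`. -/
noncomputable def mulPow : ∀ n : ℕ, TPowM k H n ⊗[k] TPowM k H n →ₗ[k] TPowM k H n
  | 0 => LinearMap.mul' k k
  | n + 1 =>
      ((TensorProduct.map (LinearMap.mul' k H) (mulPow n) :
          (H ⊗[k] H) ⊗[k] (TPowM k H n ⊗[k] TPowM k H n) →ₗ[k] H ⊗[k] TPowM k H n) ∘ₗ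
        (TensorProduct.tensorTensorTensorComm k H (TPowM k H n) H (TPowM k H n)).toLinearMap)

/-- The Connes–Moscovici cocyclic operator
`τ(h ⊗ x) = Δⁿ(S h) ⋆ (x ⊗ 1)` (factorwise product) on `TPow (n+1) = H^{⊗(n+1)}`. -/
noncomputable def cmTau (n : ℕ) : TPowM k H (n + 1) →ₗ[k] TPowM k H (n + 1) :=
  (mulPow k H (n + 1)) ∘ₗ
    (TensorProduct.map ((comulPow k H (n + 1)) ∘ₗ (HopfAlgebra.antipode (R := k)))
        (appEnd k H n) :
      H ⊗[k] TPowM k H n →ₗ[k] TPowM k H (n + 1) ⊗[k] TPowM k H (n + 1))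

/-! ### The diagonal action and its compatibility with appending a tensor factor -/

section DiagonalAction

open Coalgebra HopfAlgebra

variable {k H} {X Y : Type u} [AddCommGroup X] [Module k X] [AddCommGroup Y] [Module k Y]

/-- The diagonal action of `H` on `H ⊗ X`: `h · (a ⊗ x) = h₍₁₎ a ⊗ h₍₂₎ x`. -/
noncomputable def diagAction (ρ : H →ₐ[k] Module.End k X) : H →ₐ[k] Module.End k (H ⊗[k] X) :=
  (Module.endTensorEndAlgHom (R := k) (S := k) (A := k) (M := H) (N := X)).comp
    ((Algebra.TensorProduct.map (Algebra.lmul k H) ρ).comp (Bialgebra.comulAlgHom k H))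

/-- The orbit map `h ↦ ρ h x`. -/
def orbitMap (ρ : H →ₐ[k] Module.End k X) (x : X) : H →ₗ[k] X := ρ.toLinearMap.flip x

@[simp]
lemma orbitMap_apply (ρ : H →ₐ[k] Module.End k X) (x : X) (h : H) : orbitMap ρ x h = ρ h x := rfl

lemma diagAction_tmul (ρ : H →ₐ[k] Module.End k X) (h a : H) (x : X) :
    diagAction ρ h (a ⊗ₜ x) = TensorProduct.map (mulRight k a) (orbitMap ρ x) (comul h) := by
  simp only [diagAction, AlgHom.comp_apply, Bialgebra.comulAlgHom_apply]
  induction comul (R := k) h with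
  | zero => simp
  | add u v hu hv => simp only [map_add, LinearMap.add_apply, hu, hv]
  | tmul u v => rfl

lemma diagAction_tmul_sum (ρ : H →ₐ[k] Module.End k X) {ι : Type*} {h : H} (r : Repr k h ι)
    (a : H) (x : X) :
    diagAction ρ h (a ⊗ₜ x) = ∑ i ∈ r.index, (r.left i * a) ⊗ₜ[k] ρ (r.right i) x := by
  rw [diagAction_tmul, ← r.eq]
  simp

/-- `σ : X ⊗ H → Y` intertwines the diagonal action on `X ⊗ H` with the action on `Y`. -/
def IsDiagEquivariant (ρ : H →ₐ[k] Module.End k X) (ρ' : H →ₐ[k] Module.End k Y)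
    (σ : X ⊗[k] H →ₗ[k] Y) : Prop :=
  ∀ h x a, ρ' h (σ (x ⊗ₜ a)) = σ (TensorProduct.map (orbitMap ρ x) (mulRight k a) (comul h))

lemma IsDiagEquivariant.apply_sum {ρ : H →ₐ[k] Module.End k X} {ρ' : H →ₐ[k] Module.End k Y}
    {σ : X ⊗[k] H →ₗ[k] Y} (hσ : IsDiagEquivariant ρ ρ' σ) {ι : Type*} {h : H} (r : Repr k h ι)
    (x : X) (a : H) :
    ρ' h (σ (x ⊗ₜ a)) = ∑ i ∈ r.index, σ (ρ (r.left i) x ⊗ₜ (r.right i * a)) := by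
  rw [hσ, ← r.eq]
  simp

lemma IsDiagEquivariant.lTensor {ρ : H →ₐ[k] Module.End k X} {ρ' : H →ₐ[k] Module.End k Y}
    {σ : X ⊗[k] H →ₗ[k] Y} (hσ : IsDiagEquivariant ρ ρ' σ) :
    IsDiagEquivariant (diagAction ρ) (diagAction ρ')
      (σ.lTensor H ∘ₗ (TensorProduct.assoc k H X H).toLinearMap) := by
  intro h z a
  let r := ℛ k h
  rw [← r.eq]
  simp only [map_sum, TensorProduct.map_tmul, orbitMap_apply, mulRight_apply]
  induction z with
  | zero => simp
  | add u v hu hv =>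
    simp only [TensorProduct.add_tmul, map_add, hu, hv, Finset.sum_add_distrib]
  | tmul b y =>
    have key := congr((TensorProduct.map (mulRight k b)
        (σ ∘ₗ TensorProduct.map (orbitMap ρ y) (mulRight k a)))
      $(sum_tmul_tmul_eq r (fun i ↦ ℛ k (r.left i)) (fun i ↦ ℛ k (r.right i))))
    simp only [map_sum, LinearMap.comp_apply, TensorProduct.map_tmul, orbitMap_apply,
      mulRight_apply] at key
    simp only [LinearMap.comp_apply, LinearEquiv.coe_coe, TensorProduct.assoc_tmul,
      LinearMap.lTensor_tmul, diagAction_tmul_sum ρ' r, hσ.apply_sum (ℛ k _),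
      diagAction_tmul_sum ρ (ℛ k _), TensorProduct.tmul_sum, TensorProduct.sum_tmul, map_sum]
    exact key.symm

lemma map_mul_comul_tmul {ρ : H →ₐ[k] Module.End k X} {m : X ⊗[k] X →ₗ[k] X} {c : H →ₗ[k] X}
    (hm : ∀ h x, m (c h ⊗ₜ x) = ρ h x) (h : H) (z : H ⊗[k] X) :
    TensorProduct.map (LinearMap.mul' k H) m (TensorProduct.tensorTensorTensorComm k H X H X
      (TensorProduct.map LinearMap.id c (comul h) ⊗ₜ z)) = diagAction ρ h z := by
  induction z with
  | zero => simp
  | add u v hu hv => simp only [TensorProduct.tmul_add, map_add, hu, hv]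
  | tmul a x =>
    rw [diagAction_tmul]
    induction comul (R := k) h with
    | zero => simp
    | add u v hu hv => simp only [map_add, TensorProduct.add_tmul, hu, hv]
    | tmul u v => simp [hm]

lemma sum_tmul_counit_smul {Z : Type*} [AddCommMonoid Z] [Module k Z] (f : H →ₗ[k] Z)
    {ι : Type*} {h : H} (r : Repr k h ι) :
    ∑ i ∈ r.index, counit (R := k) (r.right i) • f (r.left i) = f h := by
  have := congr(TensorProduct.rid k Z (f.rTensor k $(sum_tmul_counit_eq (R := k) r)))
  simpa only [map_sum, LinearMap.rTensor_tmul, TensorProduct.rid_tmul, one_smul] using this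

lemma sum_counit_smul_map {Z : Type*} [AddCommMonoid Z] [Module k Z] (f : H →ₗ[k] Z)
    {ι : Type*} {h : H} (r : Repr k h ι) :
    ∑ i ∈ r.index, counit (R := k) (r.left i) • f (r.right i) = f h := by
  have := congr(f $(sum_counit_smul (R := k) r))
  simpa [map_sum] using this

lemma isDiagEquivariant_comm {ρ : H →ₐ[k] Module.End k X}
    (hρ : ∀ h x, ρ h x = counit (R := k) h • x) :
    IsDiagEquivariant ρ (diagAction ρ) (TensorProduct.comm k X H).toLinearMap := by
  intro h x a
  let f : H →ₗ[k] H ⊗[k] X := (TensorProduct.mk k H X).flip x ∘ₗ mulRight k a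
  rw [LinearEquiv.coe_coe, TensorProduct.comm_tmul, diagAction_tmul_sum ρ (ℛ k h)]
  conv_rhs => rw [← (ℛ k h).eq]
  have hl := sum_tmul_counit_smul f (ℛ k h)
  have hr := sum_counit_smul_map f (ℛ k h)
  simp only [f, LinearMap.comp_apply, mulRight_apply, LinearMap.flip_apply,
    TensorProduct.mk_apply] at hl hr
  simp only [map_sum, TensorProduct.map_tmul, orbitMap_apply, mulRight_apply, hρ,
    TensorProduct.comm_tmul, TensorProduct.tmul_smul, hl, hr]

lemma sum_mul_antipode_mul {ι : Type*} {h : H} (r : Repr k h ι) (b : H) :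
    ∑ i ∈ r.index, r.left i * antipode k (r.right i) * b = counit (R := k) h • b := by
  rw [← Finset.sum_mul, sum_mul_antipode_eq_smul, smul_mul_assoc, one_mul]

/-- If `S² = id` then `S(h₍₂₎) h₍₁₎ = ε(h)`. -/
lemma sum_antipode_right_mul_left
    (hS : (antipode (R := k) (A := H)) ∘ₗ (antipode (R := k)) = LinearMap.id)
    {ι : Type*} {h : H} (r : Repr k h ι) (b : H) :
    ∑ i ∈ r.index, antipode k (r.right i) * (r.left i * b) = counit (R := k) h • b := by
  have hS' (x : H) : antipode k (antipode k x) = x := LinearMap.congr_fun hS x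
  have := congr(antipode k $(sum_antipode_mul_eq_smul (R := k) r))
  simp only [map_sum, antipode_mul_antidistrib, hS', map_smul, antipode_one] at this
  simp only [← mul_assoc]
  rw [← Finset.sum_mul, this, smul_mul_assoc, one_mul]

/-- `h₍₁₎ · (x ⊗ S(h₍₂₎) b) = h x ⊗ b`. -/
lemma IsDiagEquivariant.sum_apply_antipode {ρ : H →ₐ[k] Module.End k X}
    {ρ' : H →ₐ[k] Module.End k Y} {σ : X ⊗[k] H →ₗ[k] Y} (hσ : IsDiagEquivariant ρ ρ' σ)
    {ι : Type*} {h : H} (r : Repr k h ι) (x : X) (b : H) :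
    ∑ i ∈ r.index, ρ' (r.left i) (σ (x ⊗ₜ (antipode k (r.right i) * b))) = σ (ρ h x ⊗ₜ b) := by
  have key := congr((σ ∘ₗ TensorProduct.map (orbitMap ρ x)
      (mulRight k b ∘ₗ LinearMap.mul' k H ∘ₗ (antipode k).lTensor H))
    $(sum_tmul_tmul_eq r (fun i ↦ ℛ k (r.left i)) (fun i ↦ ℛ k (r.right i))))
  simp only [map_sum, LinearMap.comp_apply, TensorProduct.map_tmul, LinearMap.lTensor_tmul,
    LinearMap.mul'_apply, orbitMap_apply, mulRight_apply] at key
  simp only [hσ.apply_sum (ℛ k _), ← mul_assoc]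
  rw [key]
  simp only [← map_sum, ← TensorProduct.tmul_sum, sum_mul_antipode_mul]
  have := sum_tmul_counit_smul (σ ∘ₗ (TensorProduct.mk k X H).flip b ∘ₗ orbitMap ρ x) r
  simpa [TensorProduct.tmul_smul, map_sum] using this

/-- `S(h₍₁₎) · (h₍₂₎ x ⊗ b) = x ⊗ S(h) b`. -/
lemma IsDiagEquivariant.sum_antipode_apply {ρ : H →ₐ[k] Module.End k X}
    {ρ' : H →ₐ[k] Module.End k Y} {σ : X ⊗[k] H →ₗ[k] Y} (hσ : IsDiagEquivariant ρ ρ' σ)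
    {ι : Type*} {h : H} (r : Repr k h ι) (x : X) (b : H) :
    ∑ i ∈ r.index, ρ' (antipode k (r.left i)) (σ (ρ (r.right i) x ⊗ₜ b)) =
      σ (x ⊗ₜ (antipode k h * b)) := by
  let f : H →ₗ[k] Y := σ ∘ₗ TensorProduct.mk k X H x ∘ₗ mulRight k b ∘ₗ antipode k
  have key := congr((TensorProduct.lift ρ'.toLinearMap ∘ₗ
      TensorProduct.map (LinearMap.mul' k H ∘ₗ (antipode k).rTensor H) f ∘ₗ
        (TensorProduct.assoc k H H H).symm.toLinearMap)
    $(sum_tmul_tmul_eq r (fun i ↦ ℛ k (r.left i)) (fun i ↦ ℛ k (r.right i))))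
  simp only [map_sum, LinearMap.comp_apply, LinearEquiv.coe_coe, TensorProduct.assoc_symm_tmul,
    TensorProduct.map_tmul, LinearMap.rTensor_tmul, LinearMap.mul'_apply, TensorProduct.lift.tmul,
    AlgHom.toLinearMap_apply, map_mul, Module.End.mul_apply] at key
  simp only [← hσ.sum_apply_antipode (ℛ k _), map_sum]
  refine key.symm.trans ?_
  simp only [← Module.End.mul_apply, ← map_mul, ← LinearMap.sum_apply, ← map_sum,
    sum_antipode_mul_eq_smul]
  have := sum_counit_smul_map f r
  simpa [f] using this

/-- The projection `a ⊗ x ↦ S(a) x` of `H ⊗ X` onto its coinvariants, identified with `X`. -/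
noncomputable def coinvProj (ρ : H →ₐ[k] Module.End k X) : H ⊗[k] X →ₗ[k] X :=
  TensorProduct.lift (ρ.toLinearMap ∘ₗ antipode k)

@[simp]
lemma coinvProj_tmul (ρ : H →ₐ[k] Module.End k X) (a : H) (x : X) :
    coinvProj ρ (a ⊗ₜ x) = ρ (antipode k a) x := rfl

lemma sum_diagAction_one_tmul (ρ : H →ₐ[k] Module.End k X) {ι : Type*} {h : H}
    (r : Repr k h ι) (x : X) :
    ∑ i ∈ r.index, diagAction ρ (r.left i) (1 ⊗ₜ ρ (antipode k (r.right i)) x) = h ⊗ₜ[k] x := by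
  have key := congr((TensorProduct.map LinearMap.id
      (orbitMap ρ x ∘ₗ LinearMap.mul' k H ∘ₗ (antipode k).lTensor H))
    $(sum_tmul_tmul_eq r (fun i ↦ ℛ k (r.left i)) (fun i ↦ ℛ k (r.right i))))
  simp only [map_sum, LinearMap.comp_apply, TensorProduct.map_tmul, LinearMap.lTensor_tmul,
    LinearMap.mul'_apply, orbitMap_apply, LinearMap.id_apply, map_mul,
    Module.End.mul_apply] at key
  simp only [diagAction_tmul_sum ρ (ℛ k _), mul_one]
  rw [key]
  simp only [← Module.End.mul_apply, ← map_mul, ← TensorProduct.tmul_sum, ← LinearMap.sum_apply,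
    ← map_sum, sum_mul_antipode_eq_smul]
  have := sum_tmul_counit_smul ((TensorProduct.mk k H X).flip x) r
  simpa [TensorProduct.tmul_smul] using this

/-- Moving the first tensor factor to the end with `σ`: `a ⊗ (b ⊗ x) ↦ b ⊗ σ (x ⊗ a)`. -/
noncomputable def rotate (σ : X ⊗[k] H →ₗ[k] Y) : H ⊗[k] (H ⊗[k] X) →ₗ[k] H ⊗[k] Y :=
  σ.lTensor H ∘ₗ (TensorProduct.assoc k H X H).toLinearMap ∘ₗ
    (TensorProduct.comm k H (H ⊗[k] X)).toLinearMap

@[simp]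
lemma rotate_tmul (σ : X ⊗[k] H →ₗ[k] Y) (a b : H) (x : X) :
    rotate σ (a ⊗ₜ (b ⊗ₜ x)) = b ⊗ₜ σ (x ⊗ₜ a) := rfl

lemma coinvProj_rotate_diagAction
    (hS : (antipode (R := k) (A := H)) ∘ₗ (antipode (R := k)) = LinearMap.id)
    {ρ : H →ₐ[k] Module.End k X} {ρ' : H →ₐ[k] Module.End k Y} {σ : X ⊗[k] H →ₗ[k] Y}
    (hσ : IsDiagEquivariant ρ ρ' σ) (h : H) (y : H ⊗[k] (H ⊗[k] X)) :
    coinvProj ρ' (rotate σ (diagAction (diagAction ρ) h y)) =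
      counit (R := k) h • coinvProj ρ' (rotate σ y) := by
  suffices (coinvProj ρ' ∘ₗ rotate σ) ∘ₗ diagAction (diagAction ρ) h =
      counit (R := k) h • (coinvProj ρ' ∘ₗ rotate σ) from LinearMap.congr_fun this y
  refine TensorProduct.ext' fun a z ↦ ?_
  induction z with
  | zero => simp
  | add u v hu hv => simp only [TensorProduct.tmul_add, map_add, hu, hv]
  | tmul b x =>
    simp only [LinearMap.comp_apply, LinearMap.smul_apply, diagAction_tmul_sum _ (ℛ k _),
      TensorProduct.tmul_sum, map_sum, rotate_tmul, coinvProj_tmul, antipode_mul_antidistrib,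
      map_mul, Module.End.mul_apply]
    simp only [← map_sum, hσ.sum_antipode_apply, ← TensorProduct.tmul_sum,
      sum_antipode_right_mul_left hS, TensorProduct.tmul_smul, map_smul]

/-- On coinvariants, `rotate` induces the operator `x ↦ coinvProj (rotate (1 ⊗ x))`. -/
lemma coinvProj_rotate
    (hS : (antipode (R := k) (A := H)) ∘ₗ (antipode (R := k)) = LinearMap.id)
    {ρ : H →ₐ[k] Module.End k X} {ρ' : H →ₐ[k] Module.End k Y} {σ : X ⊗[k] H →ₗ[k] Y}
    (hσ : IsDiagEquivariant ρ ρ' σ) (y : H ⊗[k] (H ⊗[k] X)) :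
    coinvProj ρ' (rotate σ y) =
      coinvProj ρ' (rotate σ (1 ⊗ₜ coinvProj (diagAction ρ) y)) := by
  induction y with
  | zero => simp
  | add u v hu hv => rw [map_add, map_add, hu, hv]; simp only [TensorProduct.tmul_add, map_add]
  | tmul a z =>
    rw [← sum_diagAction_one_tmul (diagAction ρ) (ℛ k a) z, map_sum, map_sum]
    simp only [coinvProj_rotate_diagAction hS hσ]
    rw [sum_diagAction_one_tmul]
    exact sum_counit_smul_map (coinvProj ρ' ∘ₗ rotate σ ∘ₗ TensorProduct.mk k H _ 1 ∘ₗ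
      orbitMap (diagAction ρ) z ∘ₗ antipode k) (ℛ k a)

end DiagonalAction

/-! ### Tensor powers -/

section TensorPowers

open Coalgebra HopfAlgebra

/-- The diagonal action of `H` on `H^{⊗n}`. -/
noncomputable def powAction : ∀ n : ℕ, H →ₐ[k] Module.End k (TPowM k H n)
  | 0 => (Algebra.lmul k k).comp (Bialgebra.counitAlgHom k H)
  | n + 1 => diagAction (powAction n)

/-- Appending a last tensor factor. -/
noncomputable def snoc : ∀ n : ℕ, TPowM k H n ⊗[k] H →ₗ[k] TPowM k H (n + 1)
  | 0 => ((TensorProduct.comm k k H).toLinearMap : k ⊗[k] H →ₗ[k] H ⊗[k] k)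
  | n + 1 => ((snoc n).lTensor H ∘ₗ (TensorProduct.assoc k H (TPowM k H n) H).toLinearMap :
      (H ⊗[k] TPowM k H n) ⊗[k] H →ₗ[k] H ⊗[k] TPowM k H (n + 1))

/-- The pure tensor `f 0 ⊗ f 1 ⊗ ⋯ ⊗ f (n - 1)`. -/
noncomputable def pureTensor : ∀ n : ℕ, (ℕ → H) → TPowM k H n
  | 0, _ => (1 : k)
  | n + 1, f => (f 0 ⊗ₜ pureTensor n (fun i ↦ f (i + 1)) : H ⊗[k] TPowM k H n)

lemma appEnd_eq_snoc (n : ℕ) (x : TPowM k H n) : appEnd k H n x = snoc k H n (x ⊗ₜ 1) := by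
  induction n with
  | zero => rfl
  | succ n ih =>
    have : (LinearMap.lTensor H (appEnd k H n) : H ⊗[k] TPowM k H n →ₗ[k] _) =
        ((snoc k H n).lTensor H ∘ₗ (TensorProduct.assoc k H (TPowM k H n) H).toLinearMap) ∘ₗ
          (TensorProduct.mk k (H ⊗[k] TPowM k H n) H).flip 1 :=
      TensorProduct.ext' fun a y ↦ congrArg (a ⊗ₜ[k] ·) (ih y)
    exact LinearMap.congr_fun this x

lemma mulPow_comulPow (n : ℕ) (h : H) (x : TPowM k H n) :
    mulPow k H n (comulPow k H n h ⊗ₜ x) = powAction k H n h x := by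
  induction n generalizing h with
  | zero => rfl
  | succ n ih => exact map_mul_comul_tmul ih h x

lemma isDiagEquivariant_snoc (n : ℕ) :
    IsDiagEquivariant (powAction k H n) (powAction k H (n + 1)) (snoc k H n) := by
  induction n with
  | zero => exact isDiagEquivariant_comm (X := k) (ρ := powAction k H 0) fun _ _ ↦ rfl
  | succ n ih => exact ih.lTensor

lemma cmTau_eq (n : ℕ) (z : H ⊗[k] TPowM k H n) :
    cmTau k H n z = coinvProj (powAction k H (n + 1)) (rotate (snoc k H n) (1 ⊗ₜ z)) := by
  have : (cmTau k H n : H ⊗[k] TPowM k H n →ₗ[k] TPowM k H (n + 1)) =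
      coinvProj (powAction k H (n + 1)) ∘ₗ rotate (snoc k H n) ∘ₗ TensorProduct.mk k H _ 1 := by
    refine TensorProduct.ext' fun a x ↦ ?_
    change mulPow k H (n + 1) (comulPow k H (n + 1) (antipode k a) ⊗ₜ appEnd k H n x) =
      powAction k H (n + 1) (antipode k a) (snoc k H n (x ⊗ₜ 1))
    rw [mulPow_comulPow, appEnd_eq_snoc]
  exact LinearMap.congr_fun this z

lemma cmTau_coinvProj
    (hS : (antipode (R := k) (A := H)) ∘ₗ (antipode (R := k)) = LinearMap.id)
    (n : ℕ) (y : H ⊗[k] (H ⊗[k] TPowM k H n)) :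
    cmTau k H n (coinvProj (diagAction (powAction k H n)) y) =
      coinvProj (powAction k H (n + 1)) (rotate (snoc k H n) y) := by
  rw [cmTau_eq, ← coinvProj_rotate hS (isDiagEquivariant_snoc k H n)]

lemma snoc_pureTensor (n : ℕ) (f : ℕ → H) :
    snoc k H n (pureTensor k H n f ⊗ₜ f n) = pureTensor k H (n + 1) f := by
  induction n generalizing f with
  | zero => rfl
  | succ n ih => exact congrArg (f 0 ⊗ₜ[k] ·) (ih fun i ↦ f (i + 1))

lemma pureTensor_congr (n : ℕ) {f g : ℕ → H} (h : ∀ i < n, f i = g i) :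
    pureTensor k H n f = pureTensor k H n g := by
  induction n generalizing f g with
  | zero => rfl
  | succ n ih =>
    change f 0 ⊗ₜ[k] _ = g 0 ⊗ₜ[k] _
    rw [h 0 n.succ_pos, ih fun i hi ↦ h (i + 1) (Nat.succ_lt_succ hi)]

variable {k H} in
lemma linearMap_ext_pureTensor {M : Type*} [AddCommGroup M] [Module k M] (n : ℕ)
    {φ ψ : TPowM k H n →ₗ[k] M}
    (h : ∀ f, φ (pureTensor k H n f) = ψ (pureTensor k H n f)) : φ = ψ := by
  induction n with
  | zero =>
    have : (φ : k →ₗ[k] M) = (ψ : k →ₗ[k] M) := LinearMap.ext_ring (h fun _ ↦ 1)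
    exact this
  | succ n ih =>
    refine TensorProduct.ext (LinearMap.ext fun a ↦ ih fun f ↦ ?_)
    exact h fun i ↦ Nat.casesOn i a f

/-- The class in `H^{⊗(n+1)}` of the pure tensor `f 0 ⊗ ⋯ ⊗ f (n + 1)`. -/
noncomputable def pureClass (n : ℕ) (f : ℕ → H) : TPowM k H (n + 1) :=
  coinvProj (powAction k H (n + 1)) (pureTensor k H (n + 2) f)

lemma cmTau_pureClass
    (hS : (antipode (R := k) (A := H)) ∘ₗ (antipode (R := k)) = LinearMap.id)
    (n : ℕ) {f : ℕ → H} (hf : f (n + 2) = f 0) :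
    cmTau k H n (pureClass k H n f) = pureClass k H n (fun i ↦ f (i + 1)) := by
  refine (cmTau_coinvProj k H hS n _).trans (congrArg (coinvProj (powAction k H (n + 1))) ?_)
  change f 1 ⊗ₜ[k] snoc k H n (pureTensor k H n (fun i ↦ f (i + 1 + 1)) ⊗ₜ f 0) =
    f 1 ⊗ₜ[k] pureTensor k H (n + 1) (fun i ↦ f (i + 1 + 1))
  rw [← snoc_pureTensor k H n (fun i ↦ f (i + 1 + 1)), ← hf]

lemma cmTau_pow_pureClass
    (hS : (antipode (R := k) (A := H)) ∘ₗ (antipode (R := k)) = LinearMap.id)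
    (n : ℕ) {f : ℕ → H} (hf : Function.Periodic f (n + 2)) (m : ℕ) :
    ((cmTau k H n) ^ m : Module.End k (TPowM k H (n + 1))) (pureClass k H n f) =
      pureClass k H n (fun i ↦ f (i + m)) := by
  induction m with
  | zero => rfl
  | succ m ih =>
    rw [pow_succ', Module.End.mul_apply, ih, cmTau_pureClass k H hS n]
    · simp only [add_assoc, add_comm 1 m]
    · simpa [add_comm] using hf m

lemma pureClass_of_eq_one (n : ℕ) {f : ℕ → H} (hf : f 0 = 1) :
    pureClass k H n f = pureTensor k H (n + 1) (fun i ↦ f (i + 1)) := by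
  change powAction k H (n + 1) (antipode k (f 0)) _ = _
  rw [hf, antipode_one, map_one, Module.End.one_apply]

end TensorPowers

theorem cmTau_pow_eq_id
    (hS : (HopfAlgebra.antipode (R := k) (A := H)) ∘ₗ (HopfAlgebra.antipode (R := k)) =
      LinearMap.id) :
    ∀ n : ℕ, ((cmTau k H n) ^ (n + 2) : Module.End k (TPowM k H (n + 1))) = 1 := by
  intro n
  refine linearMap_ext_pureTensor (n + 1) fun f ↦ ?_
  let g : ℕ → H := fun i ↦ Nat.casesOn (i % (n + 2)) 1 f
  have hg : Function.Periodic g (n + 2) := fun i ↦ by simp [g]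
  have hfg : pureTensor k H (n + 1) f = pureClass k H n g := by
    rw [pureClass_of_eq_one k H n (by simp [g])]
    refine pureTensor_congr k H (n + 1) fun i hi ↦ ?_
    simp only [g, Nat.mod_eq_of_lt (Nat.succ_lt_succ hi)]
  rw [hfg, cmTau_pow_pureClass k H hS n hg]
  exact congrArg (pureClass k H n) (funext hg)
end

section
/- Let U be a left Hopf algebroid over A and M a right U-module, N and P left U-modules, with the right U-action on N ⊗_A M given by (n ⊗ m)u := u_- n ⊗ m u_+. Then in the tensor product (N ⊗_A P) ⊗_{U^op} M one has (un ⊗_A p) ⊗_{U^op} m = (n ⊗_A u_- p) ⊗_{U^op} m u_+ for all u ∈ U, n ∈ N, p ∈ P, m ∈ M. Consequently, the map (u ⊗_A n) ⊗_{U^op} m ↦ u_- n ⊗_A m u_+ is a k-module isomorphism (U ⊗_A N) ⊗_{U^op} M ≅ N ⊗_A M, with inverse n ⊗ m ↦ (1 ⊗ n) ⊗ m. -/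
/-!
Left bialgebroids and left Hopf algebroids (Schauenburg's `×_A`-Hopf algebras).

Let `k` be a commutative ring, `A` a `k`-algebra, and `U` a `k`-algebra.  A left bialgebroid
structure on `U` over `A` consists of a source map `s : A → U` (a ring homomorphism) and a
target map `t : A → U` (a ring anti-homomorphism) with commuting images, together with an
`A`-coring structure `(Δ, ε)` on `U` for the `(A,A)`-bimodule structure
`a ▷ u ◁ b := s(a)t(b)u`, such that `Δ` lands in the Takeuchi product and is multiplicative,
and `ε` satisfies `ε(u s(ε v)) = ε(uv) = ε(u t(ε v))`.

The relevant tensor products over the (noncommutative) base `A` are realised as quotients of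
the tensor product over `k`:
* `T2 = U ⊗_A U` is `U ⊗[k] U` modulo `t(a)u ⊗ v - u ⊗ s(a)v`;
* `T3 = U ⊗_A U ⊗_A U` is `U ⊗[k] U ⊗[k] U` modulo the analogous relations in both places;
* `TOp = U ⊗_{Aᵒᵖ} U` is `U ⊗[k] U` modulo `u t(a) ⊗ v - u ⊗ t(a)v`.

Auxiliary structure maps on these quotients (which exist uniquely, being induced by
well-defined maps on `U ⊗[k] U`) are bundled as data together with the equations
characterising them on generators.

A left Hopf algebroid is a left bialgebroid whose Hopf–Galois map
`β : U ⊗_{Aᵒᵖ} U → U ⊗_A U`, `u ⊗ v ↦ u_{(1)} ⊗ u_{(2)}v`, is bijective; the translation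
map is `u_+ ⊗_{Aᵒᵖ} u_- := β⁻¹(u ⊗_A 1)`.
-/

open TensorProduct

section Bgd

variable (k A U : Type*) [CommRing k] [Ring A] [Ring U] [Algebra k A] [Algebra k U]

/-- The defining relations of `U ⊗_A U` (as a quotient of `U ⊗[k] U`):
`(u ◁ a) ⊗ v = u ⊗ (a ▷ v)`, i.e. `t(a)u ⊗ v = u ⊗ s(a)v`. -/
def bgdRel (s t : A →ₗ[k] U) : Submodule k (U ⊗[k] U) :=
  Submodule.span k
    {x | ∃ (a : A) (u v : U), x = (t a * u) ⊗ₜ[k] v - u ⊗ₜ[k] (s a * v)}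

/-- `U ⊗_A U`. -/
abbrev T2 (s t : A →ₗ[k] U) := (U ⊗[k] U) ⧸ bgdRel k A U s t

/-- The canonical projection `U ⊗[k] U → U ⊗_A U`. -/
def π2 (s t : A →ₗ[k] U) : U ⊗[k] U →ₗ[k] T2 k A U s t := (bgdRel k A U s t).mkQ

/-- The defining relations of `U ⊗_A U ⊗_A U` (as a quotient of `U ⊗[k] (U ⊗[k] U)`). -/
def bgdRel3 (s t : A →ₗ[k] U) : Submodule k (U ⊗[k] (U ⊗[k] U)) :=
  Submodule.span k
    ({x | ∃ (a : A) (u v w : U),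
        x = (t a * u) ⊗ₜ[k] (v ⊗ₜ[k] w) - u ⊗ₜ[k] ((s a * v) ⊗ₜ[k] w)} ∪
     {x | ∃ (a : A) (u v w : U),
        x = u ⊗ₜ[k] ((t a * v) ⊗ₜ[k] w) - u ⊗ₜ[k] (v ⊗ₜ[k] (s a * w))})

/-- `U ⊗_A U ⊗_A U`. -/
abbrev T3 (s t : A →ₗ[k] U) := (U ⊗[k] (U ⊗[k] U)) ⧸ bgdRel3 k A U s t

/-- The canonical projection onto `U ⊗_A U ⊗_A U`. -/
def π3 (s t : A →ₗ[k] U) : U ⊗[k] (U ⊗[k] U) →ₗ[k] T3 k A U s t := (bgdRel3 k A U s t).mkQ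

/-- The defining relations of `U ⊗_{Aᵒᵖ} U` (as a quotient of `U ⊗[k] U`):
`(a ▸ u) ⊗ v = u ⊗ (v ◁ a)`, i.e. `u t(a) ⊗ v = u ⊗ t(a)v`. -/
def opRel (t : A →ₗ[k] U) : Submodule k (U ⊗[k] U) :=
  Submodule.span k
    {x | ∃ (a : A) (u v : U), x = (u * t a) ⊗ₜ[k] v - u ⊗ₜ[k] (t a * v)}

/-- `U ⊗_{Aᵒᵖ} U`. -/
abbrev TOp (t : A →ₗ[k] U) := (U ⊗[k] U) ⧸ opRel k A U t

/-- The canonical projection `U ⊗[k] U → U ⊗_{Aᵒᵖ} U`. -/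
def πOp (t : A →ₗ[k] U) : U ⊗[k] U →ₗ[k] TOp k A U t := (opRel k A U t).mkQ

variable (s t : A →ₗ[k] U)

/-- A left bialgebroid structure on the `k`-algebra `U` over the base `k`-algebra `A`,
with source map `s` and target map `t`. -/
structure LeftBialgebroid : Type _ where
  s_one : s 1 = 1
  s_mul : ∀ a b : A, s (a * b) = s a * s b
  t_one : t 1 = 1
  t_mul : ∀ a b : A, t (a * b) = t b * t a
  st_comm : ∀ a b : A, s a * t b = t b * s a
  /-- the coproduct -/
  Δ : U →ₗ[k] T2 k A U s t
  /-- the counit -/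
  ε : U →ₗ[k] A
  Δ_one : Δ 1 = π2 k A U s t (1 ⊗ₜ[k] 1)
  ε_one : ε 1 = 1
  /-- `(ε ⊗ id)`-contraction `u ⊗_A v ↦ s(ε u)v` -/
  cuL : T2 k A U s t →ₗ[k] U
  cuL_eq : ∀ x y : U, cuL (π2 k A U s t (x ⊗ₜ[k] y)) = s (ε x) * y
  /-- `(id ⊗ ε)`-contraction `u ⊗_A v ↦ t(ε v)u` -/
  cuR : T2 k A U s t →ₗ[k] U
  cuR_eq : ∀ x y : U, cuR (π2 k A U s t (x ⊗ₜ[k] y)) = t (ε y) * x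
  /-- left counitality -/
  counit_left : ∀ u : U, cuL (Δ u) = u
  /-- right counitality -/
  counit_right : ∀ u : U, cuR (Δ u) = u
  /-- the action `a ⬝ (u ⊗_A v) = u t(a) ⊗_A v` -/
  actL : A → T2 k A U s t →ₗ[k] T2 k A U s t
  actL_eq : ∀ (a : A) (x y : U),
    actL a (π2 k A U s t (x ⊗ₜ[k] y)) = π2 k A U s t ((x * t a) ⊗ₜ[k] y)
  /-- the action `(u ⊗_A v) ⬝ a = u ⊗_A v s(a)` -/
  actR : A → T2 k A U s t →ₗ[k] T2 k A U s t
  actR_eq : ∀ (a : A) (x y : U),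
    actR a (π2 k A U s t (x ⊗ₜ[k] y)) = π2 k A U s t (x ⊗ₜ[k] (y * s a))
  /-- the coproduct takes values in the Takeuchi product `U ×_A U` -/
  takeuchi : ∀ (a : A) (u : U), actL a (Δ u) = actR a (Δ u)
  /-- `Δ ⊗_A id` -/
  ΔL : T2 k A U s t →ₗ[k] T3 k A U s t
  ΔL_eq : ∀ (x y : U) (w : U ⊗[k] U), π2 k A U s t w = Δ x →
    ΔL (π2 k A U s t (x ⊗ₜ[k] y)) =
      ((π3 k A U s t) ∘ₗ
        (LinearMap.lTensor U ((TensorProduct.mk k U U).flip y))) w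
  /-- `id ⊗_A Δ` -/
  ΔR : T2 k A U s t →ₗ[k] T3 k A U s t
  ΔR_eq : ∀ (x y : U) (w : U ⊗[k] U), π2 k A U s t w = Δ y →
    ΔR (π2 k A U s t (x ⊗ₜ[k] y)) =
      ((π3 k A U s t) ∘ₗ (TensorProduct.mk k U (U ⊗[k] U) x)) w
  /-- coassociativity -/
  coassoc : ∀ u : U, ΔL (Δ u) = ΔR (Δ u)
  /-- right multiplication in both tensor legs: `(p ⊗_A q) ⬝ (x ⊗ y) = px ⊗_A qy` -/
  mulT : U ⊗[k] U →ₗ[k] T2 k A U s t →ₗ[k] T2 k A U s t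
  mulT_eq : ∀ x y p q : U,
    mulT (x ⊗ₜ[k] y) (π2 k A U s t (p ⊗ₜ[k] q)) = π2 k A U s t ((p * x) ⊗ₜ[k] (q * y))
  /-- multiplicativity of the coproduct -/
  Δ_mul : ∀ (u v : U) (w : U ⊗[k] U), π2 k A U s t w = Δ v → Δ (u * v) = mulT w (Δ u)
  /-- the counit identities `ε(u s(ε v)) = ε(uv) = ε(u t(ε v))` -/
  ε_s : ∀ u v : U, ε (u * s (ε v)) = ε (u * v)
  ε_t : ∀ u v : U, ε (u * t (ε v)) = ε (u * v)

/-- A left Hopf algebroid structure (`×_A`-Hopf algebra) on a left bialgebroid `B`: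
the Hopf–Galois map `β : U ⊗_{Aᵒᵖ} U → U ⊗_A U`, `u ⊗ v ↦ u_{(1)} ⊗ u_{(2)}v`, together
with a (two-sided) inverse. -/
structure LeftHopfAlgebroid (B : LeftBialgebroid k A U s t) where
  /-- right multiplication on the second leg of `U ⊗_A U` -/
  mulSnd : U → T2 k A U s t →ₗ[k] T2 k A U s t
  mulSnd_eq : ∀ v x y : U,
    mulSnd v (π2 k A U s t (x ⊗ₜ[k] y)) = π2 k A U s t (x ⊗ₜ[k] (y * v))
  /-- the Hopf–Galois map -/
  β : TOp k A U t →ₗ[k] T2 k A U s t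
  β_eq : ∀ u v : U, β (πOp k A U t (u ⊗ₜ[k] v)) = mulSnd v (B.Δ u)
  /-- the inverse of the Hopf–Galois map -/
  βinv : T2 k A U s t →ₗ[k] TOp k A U t
  β_left_inv : βinv ∘ₗ β = LinearMap.id
  β_right_inv : β ∘ₗ βinv = LinearMap.id

end Bgd

/-!
STATEMENT 19: Let `U` be a left Hopf algebroid over `A`, `M` a right `U`-module, and
`N`, `P` left `U`-modules.  Left modules are viewed as `(A,A)`-bimodules via
`a ▷ n ◁ b = s(a)t(b)n`, right modules via `a ▸ m ◂ b = m s(b) t(a)`; `N ⊗_A P`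
carries the diagonal left `U`-action `u(n ⊗ p) = u_{(1)}n ⊗ u_{(2)}p`, and `⊗_{Uᵒᵖ}`
coequalises this action against the right action on `M`.  Then
`(un ⊗_A p) ⊗_{Uᵒᵖ} m = (n ⊗_A u_- p) ⊗_{Uᵒᵖ} m u_+`, and the map
`(u ⊗_A n) ⊗_{Uᵒᵖ} m ↦ u_- n ⊗_A m u_+` is a `k`-module isomorphism
`(U ⊗_A N) ⊗_{Uᵒᵖ} M ≅ N ⊗_A M` with inverse `n ⊗ m ↦ (1 ⊗ n) ⊗ m`.

Translation-map elements `u_+ ⊗_{Aᵒᵖ} u_-` and coproducts `Δ(u)` are handled via arbitrary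
finite families of representatives.
-/

section Stmt19

open MulOpposite

variable (k A U : Type*) [CommRing k] [Ring A] [Ring U] [Algebra k A] [Algebra k U]
variable (s t : A →ₗ[k] U)
variable (N P M : Type*)
  [AddCommGroup N] [Module k N] [Module U N] [IsScalarTower k U N]
  [AddCommGroup P] [Module k P] [Module U P] [IsScalarTower k U P]
  [AddCommGroup M] [Module k M] [Module Uᵐᵒᵖ M] [IsScalarTower k Uᵐᵒᵖ M]

/-- The relations of `N ⊗_A P` for left `U`-modules `N`, `P` (bimodule structures
`a ▷ n ◁ b = s(a)t(b)n`): `(n ◁ a) ⊗ p = n ⊗ (a ▷ p)`. -/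
def modRel : Submodule k (N ⊗[k] P) :=
  Submodule.span k
    {x | ∃ (a : A) (n : N) (p : P), x = ((t a • n) ⊗ₜ[k] p) - (n ⊗ₜ[k] (s a • p))}

/-- `N ⊗_A P`. -/
abbrev TMod := (N ⊗[k] P) ⧸ modRel k A U s t N P

/-- The canonical projection onto `N ⊗_A P`. -/
def πMod : N ⊗[k] P →ₗ[k] TMod k A U s t N P := (modRel k A U s t N P).mkQ

/-- The relations of `X ⊗_{Uᵒᵖ} M` for a `k`-module `X` with a (diagonal) left `U`-action
`act` and a right `U`-module `M`: `(u ⬝ x) ⊗ m = x ⊗ (m u)`. -/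
def copRel (X : Type*) [AddCommGroup X] [Module k X]
    (act : U →ₗ[k] X →ₗ[k] X) : Submodule k (X ⊗[k] M) :=
  Submodule.span k
    {z | ∃ (u : U) (x : X) (m : M), z = (act u x) ⊗ₜ[k] m - x ⊗ₜ[k] ((op u) • m)}

/-- The relations of `N ⊗_A M` for a left `U`-module `N` and right `U`-module `M`
(`n ◁ a = t(a)n`, `a ▸ m = m t(a)`): `(n ◁ a) ⊗ m = n ⊗ (a ▸ m)`. -/
def modRelNM : Submodule k (N ⊗[k] M) :=
  Submodule.span k
    {z | ∃ (a : A) (n : N) (m : M),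
      z = ((t a • n) ⊗ₜ[k] m) - (n ⊗ₜ[k] ((MulOpposite.op (t a)) • m))}

section Translation

variable {k A U s t N P M}

/-- A linear map to a `k`-module which identifies `x` and `y` for each generator `x - y` of a
submodule descends to the quotient. This differs from `Submodule.liftQ` in that the additive
structure of the target is only required to be a commutative monoid. -/
def spanLift {V X : Type*} [AddCommGroup V] [Module k V] [AddCommMonoid X] [Module k X]
    (S : Set V) (f : V →ₗ[k] X) (h : ∀ z ∈ S, ∃ x y, z = x - y ∧ f x = f y) :
    (V ⧸ Submodule.span k S) →ₗ[k] X :=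
  { QuotientAddGroup.lift (Submodule.span k S).toAddSubgroup f.toAddMonoidHom (fun z hz => by
      refine Submodule.span_le (p := LinearMap.ker f).2 (fun z hz => ?_) hz
      obtain ⟨x, y, rfl, hxy⟩ := h z hz
      rw [SetLike.mem_coe, LinearMap.mem_ker, sub_eq_add_neg, map_add, hxy, ← map_add,
        add_neg_cancel, map_zero]) with
    map_smul' := by rintro a ⟨x⟩; exact f.map_smul a x }

lemma π2_surjective : Function.Surjective (π2 k A U s t) := Submodule.mkQ_surjective _

lemma πOp_surjective : Function.Surjective (πOp k A U t) := Submodule.mkQ_surjective _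

lemma π2_smul_tmul (a : A) (u v : U) :
    π2 k A U s t ((t a * u) ⊗ₜ[k] v) = π2 k A U s t (u ⊗ₜ[k] (s a * v)) :=
  (Submodule.Quotient.eq _).2 (Submodule.subset_span ⟨a, u, v, rfl⟩)

lemma πOp_smul_tmul (a : A) (u v : U) :
    πOp k A U t ((u * t a) ⊗ₜ[k] v) = πOp k A U t (u ⊗ₜ[k] (t a * v)) :=
  (Submodule.Quotient.eq _).2 (Submodule.subset_span ⟨a, u, v, rfl⟩)

lemma πMod_smul_tmul (a : A) (n : N) (p : P) :
    πMod k A U s t N P ((t a • n) ⊗ₜ[k] p) = πMod k A U s t N P (n ⊗ₜ[k] (s a • p)) :=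
  (Submodule.Quotient.eq _).2 (Submodule.subset_span ⟨a, n, p, rfl⟩)

lemma mkQ_modRelNM_smul_tmul (a : A) (n : N) (m : M) :
    (modRelNM k A U t N M).mkQ ((t a • n) ⊗ₜ[k] m) =
      (modRelNM k A U t N M).mkQ (n ⊗ₜ[k] (op (t a) • m)) :=
  (Submodule.Quotient.eq _).2 (Submodule.subset_span ⟨a, n, m, rfl⟩)

lemma mkQ_copRel_act_tmul {X : Type*} [AddCommGroup X] [Module k X]
    (act : U →ₗ[k] X →ₗ[k] X) (u : U) (x : X) (m : M) :
    (copRel k U M X act).mkQ (act u x ⊗ₜ[k] m) =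
      (copRel k U M X act).mkQ (x ⊗ₜ[k] (op u • m)) :=
  (Submodule.Quotient.eq _).2 (Submodule.subset_span ⟨u, x, m, rfl⟩)

lemma T2_hom_ext {X : Type*} [AddCommGroup X] [Module k X] {f g : T2 k A U s t →ₗ[k] X}
    (h : ∀ x y : U, f (π2 k A U s t (x ⊗ₜ[k] y)) = g (π2 k A U s t (x ⊗ₜ[k] y))) : f = g :=
  Submodule.linearMap_qext _ (TensorProduct.ext' h)

variable (s t N P) in
/-- `p`, `q` act on `n`, `r` by `p n ⊗_A q r`. -/
noncomputable def legActAux : U →ₗ[k] U →ₗ[k] N →ₗ[k] P →ₗ[k] TMod k A U s t N P :=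
  ((TensorProduct.mapBilinear (.id k) N P N P).compl₁₂
    (Algebra.lsmul k k N).toLinearMap (Algebra.lsmul k k P).toLinearMap).compr₂
    (TensorProduct.lcurry (.id k) N P _ ∘ₗ LinearMap.compRight k (πMod k A U s t N P))

variable (N P) in
/-- `p ⊗_A q` acts on `n`, `r` by `p n ⊗_A q r`. -/
noncomputable def legAct :
    T2 k A U s t →ₗ[k] N →ₗ[k] P →ₗ[k] TMod k A U s t N P :=
  spanLift _ (TensorProduct.lift (legActAux s t N P)) (by
    rintro _ ⟨a, u, v, rfl⟩
    refine ⟨_, _, rfl, ?_⟩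
    ext n p
    simp [legActAux, πMod_smul_tmul])

@[simp] lemma legAct_π2 (x y : U) (n : N) (p : P) :
    legAct N P (π2 k A U s t (x ⊗ₜ[k] y)) n p =
      πMod k A U s t N P ((x • n) ⊗ₜ[k] (y • p)) := rfl

variable (t N M) in
/-- `x`, `y` send `n`, `m` to `y n ⊗_A m x`. -/
noncomputable def opLegActAux :
    U →ₗ[k] U →ₗ[k] N →ₗ[k] M →ₗ[k] ((N ⊗[k] M) ⧸ modRelNM k A U t N M) :=
  ((TensorProduct.mapBilinear (.id k) N M N M).flip.compl₁₂
    ((Algebra.lsmul k k M).toLinearMap ∘ₗ (opLinearEquiv k).toLinearMap)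
    (Algebra.lsmul k k N).toLinearMap).compr₂
    (TensorProduct.lcurry (.id k) N M _ ∘ₗ
      LinearMap.compRight k (modRelNM k A U t N M).mkQ)

variable (N M) in
/-- `x ⊗_{Aᵒᵖ} y` sends `n`, `m` to `y n ⊗_A m x`. -/
noncomputable def opLegAct :
    TOp k A U t →ₗ[k] N →ₗ[k] M →ₗ[k] ((N ⊗[k] M) ⧸ modRelNM k A U t N M) :=
  spanLift _ (TensorProduct.lift (opLegActAux t N M)) (by
    rintro _ ⟨a, u, v, rfl⟩
    refine ⟨_, _, rfl, ?_⟩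
    ext n m
    simpa [opLegActAux, mul_smul] using
      (mkQ_modRelNM_smul_tmul a (v • n) (op u • m)).symm)

@[simp] lemma opLegAct_πOp (x y : U) (n : N) (m : M) :
    opLegAct N M (πOp k A U t (x ⊗ₜ[k] y)) n m =
      (modRelNM k A U t N M).mkQ ((y • n) ⊗ₜ[k] (op x • m)) := rfl

lemma opLegAct_πOp_mulRight (q : U) (z : U ⊗[k] U) (n : N) (m : M) :
    opLegAct N M (πOp k A U t ((LinearMap.mulRight k q).lTensor U z)) n m =
      opLegAct N M (πOp k A U t z) (q • n) m := by
  induction z with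
  | zero => simp
  | tmul x y => simp [mul_smul]
  | add z w hz hw => simp only [map_add, LinearMap.add_apply, hz, hw]

lemma opLegAct_πOp_mulLeft (u : U) (z : U ⊗[k] U) (n : N) (m : M) :
    opLegAct N M (πOp k A U t ((LinearMap.mulLeft k u).rTensor U z)) n m =
      opLegAct N M (πOp k A U t z) n (op u • m) := by
  induction z with
  | zero => simp
  | tmul x y => simp [mul_smul]
  | add z w hz hw => simp only [map_add, LinearMap.add_apply, hz, hw]

/-- The diagonal action is determined by the coproduct. -/
lemma act_πMod (B : LeftBialgebroid k A U s t)
    (act : U →ₗ[k] TMod k A U s t N P →ₗ[k] TMod k A U s t N P)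
    (hact : ∀ (u : U) (n : N) (p : P) (ℓ : ℕ) (x y : Fin ℓ → U),
      π2 k A U s t (∑ i, x i ⊗ₜ[k] y i) = B.Δ u →
      act u (πMod k A U s t N P (n ⊗ₜ[k] p)) =
        ∑ i, πMod k A U s t N P ((x i • n) ⊗ₜ[k] (y i • p)))
    (u : U) (n : N) (p : P) :
    act u (πMod k A U s t N P (n ⊗ₜ[k] p)) = legAct N P (B.Δ u) n p := by
  obtain ⟨w, hw⟩ := π2_surjective (B.Δ u)
  obtain ⟨ℓ, x, y, rfl⟩ := TensorProduct.exists_sum_tmul_eq w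
  rw [hact u n p ℓ x y hw, ← hw]
  simp [map_sum, LinearMap.sum_apply]

/-- `M_u (v ⊗_A w) = u_{(1)} v ⊗_A u_{(2)} w`, well defined by the Takeuchi property. -/
noncomputable def comulMul (B : LeftBialgebroid k A U s t) (u : U) :
    T2 k A U s t →ₗ[k] T2 k A U s t :=
  spanLift _ (B.mulT.flip (B.Δ u)) (by
    rintro _ ⟨a, x, y, rfl⟩
    refine ⟨_, _, rfl, ?_⟩
    rw [LinearMap.flip_apply, LinearMap.flip_apply]
    have hL : B.mulT ((t a * x) ⊗ₜ[k] y) = B.mulT (x ⊗ₜ[k] y) ∘ₗ B.actL a :=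
      T2_hom_ext fun p q => by simp [B.mulT_eq, B.actL_eq, mul_assoc]
    have hR : B.mulT (x ⊗ₜ[k] (s a * y)) = B.mulT (x ⊗ₜ[k] y) ∘ₗ B.actR a :=
      T2_hom_ext fun p q => by simp [B.mulT_eq, B.actR_eq, mul_assoc]
    rw [hL, hR, LinearMap.comp_apply, LinearMap.comp_apply, B.takeuchi])

@[simp] lemma comulMul_π2 (B : LeftBialgebroid k A U s t) (u : U) (z : U ⊗[k] U) :
    comulMul B u (π2 k A U s t z) = B.mulT z (B.Δ u) := rfl

namespace LeftHopfAlgebroid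

variable {B : LeftBialgebroid k A U s t} (H : LeftHopfAlgebroid k A U s t B)

lemma βinv_β (z : TOp k A U t) : H.βinv (H.β z) = z := LinearMap.congr_fun H.β_left_inv z

lemma β_βinv (z : T2 k A U s t) : H.β (H.βinv z) = z := LinearMap.congr_fun H.β_right_inv z

lemma mulSnd_mulSnd (q y : U) (z : T2 k A U s t) :
    H.mulSnd q (H.mulSnd y z) = H.mulSnd (y * q) z :=
  LinearMap.congr_fun (f := H.mulSnd q ∘ₗ H.mulSnd y)
    (T2_hom_ext fun a b => by simp [H.mulSnd_eq, mul_assoc]) z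

lemma mulSnd_one (z : T2 k A U s t) : H.mulSnd 1 z = z :=
  LinearMap.congr_fun (g := LinearMap.id) (T2_hom_ext fun a b => by simp [H.mulSnd_eq]) z

lemma mulSnd_π2 (q : U) (z : U ⊗[k] U) :
    H.mulSnd q (π2 k A U s t z) = π2 k A U s t ((LinearMap.mulRight k q).lTensor U z) := by
  induction z with
  | zero => simp
  | tmul x y => simp [H.mulSnd_eq]
  | add z w hz hw => simp only [map_add, hz, hw]

lemma mulSnd_mulT (y : U) (w : U ⊗[k] U) (z : T2 k A U s t) :
    H.mulSnd y (B.mulT w z) = B.mulT ((LinearMap.mulRight k y).lTensor U w) z := by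
  induction w with
  | zero => simp
  | tmul a b =>
    exact LinearMap.congr_fun (f := H.mulSnd y ∘ₗ B.mulT (a ⊗ₜ[k] b))
      (T2_hom_ext fun p q => by simp [H.mulSnd_eq, B.mulT_eq, mul_assoc]) z
  | add w w' h h' => simp only [map_add, LinearMap.add_apply, h, h']

lemma β_πOp_mulRight (q : U) (z : U ⊗[k] U) :
    H.β (πOp k A U t ((LinearMap.mulRight k q).lTensor U z)) =
      H.mulSnd q (H.β (πOp k A U t z)) := by
  induction z with
  | zero => simp
  | tmul x y => simp [H.β_eq, H.mulSnd_mulSnd]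
  | add z w hz hw => simp only [map_add, hz, hw]

lemma β_πOp_mulLeft (u : U) (z : U ⊗[k] U) :
    H.β (πOp k A U t ((LinearMap.mulLeft k u).rTensor U z)) =
      comulMul B u (H.β (πOp k A U t z)) := by
  induction z with
  | zero => simp
  | tmul x y =>
    obtain ⟨w, hw⟩ := π2_surjective (B.Δ x)
    simp [H.β_eq, B.Δ_mul u x w hw, ← hw, H.mulSnd_mulT, H.mulSnd_π2]
  | add z w hz hw => simp only [map_add, hz, hw]

lemma Δ_t {B : LeftBialgebroid k A U s t} (H : LeftHopfAlgebroid k A U s t B) (a : A) :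
    B.Δ (t a) = π2 k A U s t (1 ⊗ₜ[k] t a) := by
  have h := congrArg H.β (πOp_smul_tmul (k := k) (A := A) (U := U) (t := t) a 1 1)
  simpa [H.β_eq, H.mulSnd_one, B.Δ_one, H.mulSnd_eq] using h

lemma legAct_β_πOp (x y : U) (n : N) (p : P) :
    legAct N P (H.β (πOp k A U t (x ⊗ₜ[k] y))) n p = legAct N P (B.Δ x) n (y • p) := by
  obtain ⟨w, hw⟩ := π2_surjective (B.Δ x)
  rw [H.β_eq, ← hw, H.mulSnd_π2]
  clear hw
  induction w with
  | zero => simp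
  | tmul a b => simp [mul_smul]
  | add z w hz hw => simp only [map_add, LinearMap.add_apply, hz, hw]

/-- `(un ⊗_A p) ⊗_{Uᵒᵖ} m = (n ⊗_A u_- p) ⊗_{Uᵒᵖ} m u_+`. -/
lemma mkQ_copRel_smul_tmul
    (act : U →ₗ[k] TMod k A U s t N P →ₗ[k] TMod k A U s t N P)
    (hact : ∀ (u : U) (n : N) (p : P),
      act u (πMod k A U s t N P (n ⊗ₜ[k] p)) = legAct N P (B.Δ u) n p)
    (u : U) (n : N) (p : P) (m : M) (ℓ : ℕ) (x y : Fin ℓ → U)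
    (h : πOp k A U t (∑ i, x i ⊗ₜ[k] y i) = H.βinv (π2 k A U s t (u ⊗ₜ[k] 1))) :
    (copRel k U M (TMod k A U s t N P) act).mkQ
        ((πMod k A U s t N P ((u • n) ⊗ₜ[k] p)) ⊗ₜ[k] m) =
      ∑ i, (copRel k U M (TMod k A U s t N P) act).mkQ
        ((πMod k A U s t N P (n ⊗ₜ[k] (y i • p))) ⊗ₜ[k] ((op (x i)) • m)) := by
  have h1 : πMod k A U s t N P ((u • n) ⊗ₜ[k] p) =
      ∑ i, act (x i) (πMod k A U s t N P (n ⊗ₜ[k] (y i • p))) := by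
    have h2 : legAct N P (π2 k A U s t (u ⊗ₜ[k] 1)) n p = _ :=
      congrArg (fun z => legAct N P z n p) ((congrArg H.β h).trans (H.β_βinv _)).symm
    simpa only [legAct_π2, one_smul, map_sum, LinearMap.sum_apply, H.legAct_β_πOp,
      ← hact] using h2
  rw [h1, TensorProduct.sum_tmul, map_sum]
  exact Finset.sum_congr rfl fun i _ => mkQ_copRel_act_tmul act _ _ _

lemma opLegAct_βinv_tmul (p q : U) (n : N) (m : M) :
    opLegAct N M (H.βinv (π2 k A U s t (p ⊗ₜ[k] q))) n m =
      opLegAct N M (H.βinv (π2 k A U s t (p ⊗ₜ[k] 1))) (q • n) m := by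
  obtain ⟨z, hz⟩ := πOp_surjective (H.βinv (π2 k A U s t (p ⊗ₜ[k] 1)))
  have h := H.β_πOp_mulRight q z
  rw [hz, H.β_βinv, H.mulSnd_eq, one_mul] at h
  rw [← h, H.βinv_β, opLegAct_πOp_mulRight, hz]

lemma opLegAct_βinv_comulMul (u : U) (w : T2 k A U s t) (n : N) (m : M) :
    opLegAct N M (H.βinv (comulMul B u w)) n m = opLegAct N M (H.βinv w) n (op u • m) := by
  obtain ⟨z, hz⟩ := πOp_surjective (H.βinv w)
  have h := H.β_πOp_mulLeft u z
  rw [hz, H.β_βinv] at h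
  rw [← h, H.βinv_β, opLegAct_πOp_mulLeft, hz]

variable (N M) in
/-- The map `u ⊗_A n ↦ (m ↦ u_- n ⊗_A m u_+)`. -/
noncomputable def translate :
    TMod k A U s t U N →ₗ[k] M →ₗ[k] ((N ⊗[k] M) ⧸ modRelNM k A U t N M) :=
  spanLift _
    (TensorProduct.lift (opLegAct N M ∘ₗ H.βinv ∘ₗ π2 k A U s t ∘ₗ
      (TensorProduct.mk k U U).flip 1))
    (by
      rintro _ ⟨a, u, n, rfl⟩
      refine ⟨_, _, rfl, ?_⟩
      ext m
      simp [π2_smul_tmul, H.opLegAct_βinv_tmul u (s a)])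

@[simp] lemma translate_πMod (u : U) (n : N) (m : M) :
    H.translate N M (πMod k A U s t U N (u ⊗ₜ[k] n)) m =
      opLegAct N M (H.βinv (π2 k A U s t (u ⊗ₜ[k] 1))) n m := rfl

lemma translate_legAct (w : T2 k A U s t) (v : U) (n : N) (m : M) :
    H.translate N M (legAct U N w v n) m =
      opLegAct N M (H.βinv (B.mulT (v ⊗ₜ[k] 1) w)) n m := by
  obtain ⟨w, rfl⟩ := π2_surjective w
  induction w with
  | zero => simp
  | tmul p q => simp [B.mulT_eq, H.opLegAct_βinv_tmul (p * v) q]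
  | add z w hz hw => simp only [map_add, LinearMap.add_apply, hz, hw]

section Iso

variable (actU : U →ₗ[k] TMod k A U s t U N →ₗ[k] TMod k A U s t U N)
  (hactU : ∀ (u v : U) (n : N),
    actU u (πMod k A U s t U N (v ⊗ₜ[k] n)) = legAct U N (B.Δ u) v n)

/-- The map `(u ⊗_A n) ⊗_{Uᵒᵖ} m ↦ u_- n ⊗_A m u_+`. -/
noncomputable def fromCop :
    ((TMod k A U s t U N ⊗[k] M) ⧸ copRel k U M (TMod k A U s t U N) actU) →ₗ[k]
      ((N ⊗[k] M) ⧸ modRelNM k A U t N M) :=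
  spanLift _ (TensorProduct.lift (H.translate N M))
    (by
      rintro _ ⟨u, x, m, rfl⟩
      refine ⟨_, _, rfl, ?_⟩
      rw [TensorProduct.lift.tmul, TensorProduct.lift.tmul]
      obtain ⟨x, rfl⟩ := Submodule.mkQ_surjective _ x
      change H.translate N M (actU u (πMod k A U s t U N x)) m =
        H.translate N M (πMod k A U s t U N x) (op u • m)
      induction x with
      | zero => simp
      | tmul v n =>
        rw [hactU, H.translate_legAct, ← comulMul_π2, H.opLegAct_βinv_comulMul, translate_πMod]
      | add z w hz hw => simp only [map_add, LinearMap.add_apply, hz, hw])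

/-- The map `n ⊗_A m ↦ (1 ⊗_A n) ⊗_{Uᵒᵖ} m`. -/
noncomputable def toCop :
    ((N ⊗[k] M) ⧸ modRelNM k A U t N M) →ₗ[k]
      ((TMod k A U s t U N ⊗[k] M) ⧸ copRel k U M (TMod k A U s t U N) actU) :=
  spanLift _
    ((copRel k U M (TMod k A U s t U N) actU).mkQ ∘ₗ
      (πMod k A U s t U N ∘ₗ TensorProduct.mk k U N 1).rTensor M)
    (by
      rintro _ ⟨a, n, m, rfl⟩
      refine ⟨_, _, rfl, ?_⟩
      have h := mkQ_copRel_act_tmul actU (t a) (πMod k A U s t U N (1 ⊗ₜ[k] n)) m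
      rw [hactU, H.Δ_t, legAct_π2, one_smul] at h
      exact h)

/-- The isomorphism `(U ⊗_A N) ⊗_{Uᵒᵖ} M ≅ N ⊗_A M`. -/
noncomputable def copEquiv :
    ((TMod k A U s t U N ⊗[k] M) ⧸ copRel k U M (TMod k A U s t U N) actU) ≃ₗ[k]
      ((N ⊗[k] M) ⧸ modRelNM k A U t N M) :=
  LinearEquiv.ofLinearMap (H.fromCop (M := M) actU hactU) (H.toCop actU hactU)
    (Submodule.linearMap_qext _ (TensorProduct.ext' fun n m => by
      change opLegAct N M (H.βinv (π2 k A U s t (1 ⊗ₜ[k] 1))) n m =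
        (modRelNM k A U t N M).mkQ (n ⊗ₜ[k] m)
      have h := H.βinv_β (πOp k A U t (1 ⊗ₜ[k] 1))
      rw [H.β_eq, H.mulSnd_one, B.Δ_one] at h
      rw [h, opLegAct_πOp, one_smul, op_one, one_smul]))
    (Submodule.linearMap_qext _ (TensorProduct.ext (Submodule.linearMap_qext _
      (TensorProduct.ext' fun u n => LinearMap.ext fun m => by
        change H.toCop actU hactU (opLegAct N M (H.βinv (π2 k A U s t (u ⊗ₜ[k] 1))) n m) =
          (copRel k U M (TMod k A U s t U N) actU).mkQ
            (πMod k A U s t U N (u ⊗ₜ[k] n) ⊗ₜ[k] m)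
        obtain ⟨z, hz⟩ := πOp_surjective (H.βinv (π2 k A U s t (u ⊗ₜ[k] 1)))
        obtain ⟨ℓ, x, y, rfl⟩ := TensorProduct.exists_sum_tmul_eq z
        have h := H.mkQ_copRel_smul_tmul actU hactU u 1 n m ℓ x y hz
        rw [smul_eq_mul, mul_one] at h
        rw [h, ← hz]
        simp only [map_sum, LinearMap.sum_apply]
        rfl))))

end Iso

end LeftHopfAlgebroid

end Translation

theorem tensor_over_Uop_translation
    (B : LeftBialgebroid k A U s t) (H : LeftHopfAlgebroid k A U s t B)
    -- the diagonal left `U`-action on `N ⊗_A P`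
    (act : U →ₗ[k] TMod k A U s t N P →ₗ[k] TMod k A U s t N P)
    (hact : ∀ (u : U) (n : N) (p : P) (ℓ : ℕ) (x y : Fin ℓ → U),
      π2 k A U s t (∑ i, x i ⊗ₜ[k] y i) = B.Δ u →
      act u (πMod k A U s t N P (n ⊗ₜ[k] p)) =
        ∑ i, πMod k A U s t N P ((x i • n) ⊗ₜ[k] (y i • p)))
    -- the diagonal left `U`-action on `U ⊗_A N` (`U` a left module over itself)
    (actU : U →ₗ[k] TMod k A U s t U N →ₗ[k] TMod k A U s t U N)
    (hactU : ∀ (u v : U) (n : N) (ℓ : ℕ) (x y : Fin ℓ → U),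
      π2 k A U s t (∑ i, x i ⊗ₜ[k] y i) = B.Δ u →
      actU u (πMod k A U s t U N (v ⊗ₜ[k] n)) =
        ∑ i, πMod k A U s t U N ((x i * v) ⊗ₜ[k] (y i • n))) :
    -- (1) the balancing identity `(un ⊗_A p) ⊗_{Uᵒᵖ} m = (n ⊗_A u_- p) ⊗_{Uᵒᵖ} m u_+`
    (∀ (u : U) (n : N) (p : P) (m : M) (ℓ : ℕ) (x y : Fin ℓ → U),
      πOp k A U t (∑ i, x i ⊗ₜ[k] y i) = H.βinv (π2 k A U s t (u ⊗ₜ[k] 1)) →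
      (copRel k U M (TMod k A U s t N P) act).mkQ
          ((πMod k A U s t N P ((u • n) ⊗ₜ[k] p)) ⊗ₜ[k] m) =
        ∑ i, (copRel k U M (TMod k A U s t N P) act).mkQ
          ((πMod k A U s t N P (n ⊗ₜ[k] (y i • p))) ⊗ₜ[k] ((op (x i)) • m))) ∧
    -- (2) the isomorphism `(U ⊗_A N) ⊗_{Uᵒᵖ} M ≅ N ⊗_A M`
    (∃ φ : ((TMod k A U s t U N ⊗[k] M) ⧸ copRel k U M (TMod k A U s t U N) actU)
        ≃ₗ[k] ((N ⊗[k] M) ⧸ modRelNM k A U t N M),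
      (∀ (n : N) (m : M),
        φ.symm ((modRelNM k A U t N M).mkQ (n ⊗ₜ[k] m)) =
          (copRel k U M (TMod k A U s t U N) actU).mkQ
            ((πMod k A U s t U N ((1 : U) ⊗ₜ[k] n)) ⊗ₜ[k] m)) ∧
      (∀ (u : U) (n : N) (m : M) (ℓ : ℕ) (x y : Fin ℓ → U),
        πOp k A U t (∑ i, x i ⊗ₜ[k] y i) = H.βinv (π2 k A U s t (u ⊗ₜ[k] 1)) →
        φ ((copRel k U M (TMod k A U s t U N) actU).mkQ
            ((πMod k A U s t U N (u ⊗ₜ[k] n)) ⊗ₜ[k] m)) =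
          ∑ i, (modRelNM k A U t N M).mkQ ((y i • n) ⊗ₜ[k] ((op (x i)) • m)))) := by
  have hact' := act_πMod B act hact
  have hactU' := act_πMod B actU hactU
  refine ⟨H.mkQ_copRel_smul_tmul act hact', H.copEquiv actU hactU', fun n m => rfl, ?_⟩
  intro u n m ℓ x y h
  change opLegAct N M (H.βinv (π2 k A U s t (u ⊗ₜ[k] 1))) n m = _
  rw [← h]
  simp only [map_sum, LinearMap.sum_apply, opLegAct_πOp]

end Stmt19
end
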